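/- A power series F in k((X^{-1})), not rational, is badly approximable (i.e., inf over nonzero q in k[X] of |q| ||qF|| > 0) if and only if the degrees of its partial quotients a_n are uniformly bounded. -/

import Mathlib

open Polynomial Filter

noncomputable section
open scoped Classical

namespace Littlewood

variable (k : Type*) [Field k]

/-- The element `X` of `k((X⁻¹))`: the inverse of the Laurent-series variable `t = X⁻¹`. -/
def XLS : LaurentSeries k := (HahnSeries.single (1 : ℤ) (1 : k))⁻¹

variable {k}

/-- Embedding of `k[X]` into `k((X⁻¹))`, sending the polynomial variable to `X`. -/
def emb (p : Polynomial k) : LaurentSeries k := Polynomial.aeval (XLS k) p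

/-- The degree of a Laurent series in `X⁻¹`: if `F = ∑_{h ≥ -m} f_h X^{-h}` with
`f_{-m} ≠ 0` then `deg F = m`. -/
def deg (F : LaurentSeries k) : ℤ := -F.order

/-- The norm `|F| = 2 ^ deg F`, with `|0| = 0`. -/
def lnorm (F : LaurentSeries k) : ℝ := if F = 0 then 0 else (2 : ℝ) ^ (deg F)

/-- Fractional part: the part of the series comprising only negative powers of `X`. -/
def frac (F : LaurentSeries k) : LaurentSeries k where
  coeff n := if 1 ≤ n then F.coeff n else 0
  isPWO_support' := F.isPWO_support'.mono (fun n hn => by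
    simp only [Function.mem_support] at hn ⊢
    intro h
    exact hn (by simp [h]))

/-- `‖F‖`: the norm of the fractional part of `F`. -/
def fnorm (F : LaurentSeries k) : ℝ := lnorm (frac F)

/-- `F` is a rational function. -/
def IsRat (F : LaurentSeries k) : Prop :=
  ∃ p q : Polynomial k, q ≠ 0 ∧ F * emb q = emb p

/-- The polynomial part of a Laurent series (the part with nonnegative powers of `X`). -/
def polyPart (F : LaurentSeries k) : Polynomial k :=
  ∑ i ∈ Finset.range ((-F.order).toNat + 1), Polynomial.C (F.coeff (-(i : ℤ))) * Polynomial.X ^ i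

/-- The complete quotients of the continued fraction algorithm applied to `F`. -/
def cfRem (F : LaurentSeries k) : ℕ → LaurentSeries k
  | 0 => F
  | n + 1 => (cfRem F n - emb (polyPart (cfRem F n)))⁻¹

/-- The partial quotients of the continued fraction expansion of `F`. -/
def pq (F : LaurentSeries k) (n : ℕ) : Polynomial k := polyPart (cfRem F n)

/-- Denominators `q_n` of the convergents of the continued fraction with
partial quotients `a`. -/
def den (a : ℕ → Polynomial k) : ℕ → Polynomial k
  | 0 => 1
  | 1 => a 1
  | n + 2 => a (n + 2) * den a (n + 1) + den a n

/-- Numerators `p_n` of the convergents. -/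
def num (a : ℕ → Polynomial k) : ℕ → Polynomial k
  | 0 => a 0
  | 1 => a 1 * a 0 + 1
  | n + 2 => a (n + 2) * num a (n + 1) + num a n

/-- The value of a finite continued fraction `[b_0, b_1, …, b_m]` over `k[X]`. -/
def finCF : List (Polynomial k) → LaurentSeries k
  | [] => 0
  | [b] => emb b
  | b :: l => emb b + (finCF l)⁻¹

/-- `F` is badly approximable. -/
def Bad (F : LaurentSeries k) : Prop :=
  ∃ c : ℝ, 0 < c ∧ ∀ q : Polynomial k, q ≠ 0 → c ≤ lnorm (emb q) * fnorm (emb q * F)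

/-!
Since every nonzero polynomial has norm at least `1`, if `P` and `Q` are coprime and `q` is nonzero
of degree less than `deg Q`, then the nonzero polynomial `q P - p Q = Q (q F - p) - q (Q F - P)`
forces `|Q| ‖q F‖ ≥ 1` as soon as `|q| |Q F - P| < 1`. Applied to the convergents `p_n / q_n`, for
which `|q_n F - p_n| = |q_{n+1}|⁻¹`, this gives
`|q| ‖q F‖ ≥ |q_n| / |q_{n+1}| = 2 ^ (-deg a_{n+1})` whenever `|q_n| ≤ |q| < |q_{n+1}|`, with
equality at `q = q_n`. Hence the infimum of `|q| ‖q F‖` is that of the numbers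
`2 ^ (-deg a_{n+1})`.
-/

section Embedding

lemma emb_zero : emb (0 : k[X]) = 0 := map_zero (aeval (XLS k))

lemma emb_one : emb (1 : k[X]) = 1 := map_one (aeval (XLS k))

lemma emb_add (p q : k[X]) : emb (p + q) = emb p + emb q := map_add (aeval (XLS k)) p q

lemma emb_sub (p q : k[X]) : emb (p - q) = emb p - emb q := map_sub (aeval (XLS k)) p q

lemma emb_mul (p q : k[X]) : emb (p * q) = emb p * emb q := map_mul (aeval (XLS k)) p q

lemma emb_monomial (m : ℕ) (c : k) : emb (monomial m c) = HahnSeries.single (-(m : ℤ)) c := by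
  rw [emb, aeval_monomial, XLS, HahnSeries.inv_single, HahnSeries.single_pow,
    HahnSeries.algebraMap_apply', PowerSeries.algebraMap_apply, Algebra.algebraMap_self,
    RingHom.id_apply, HahnSeries.ofPowerSeries_C, HahnSeries.C_apply, HahnSeries.single_mul_single]
  simp

lemma coeff_emb (p : k[X]) (n : ℤ) :
    (emb p).coeff n = if n ≤ 0 then p.coeff (-n).toNat else 0 := by
  induction p using Polynomial.induction_on' with
  | add p q hp hq =>
    rw [emb_add, HahnSeries.coeff_add, hp, hq, coeff_add]
    split_ifs <;> simp
  | monomial m c =>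
    rw [emb_monomial, HahnSeries.coeff_single, coeff_monomial]
    grind

lemma emb_injective : Function.Injective (emb : k[X] → LaurentSeries k) := by
  intro p q h
  ext m
  simpa [coeff_emb] using congrArg (fun F => HahnSeries.coeff F (-(m : ℤ))) h

lemma emb_eq_zero {p : k[X]} : emb p = 0 ↔ p = 0 := by
  rw [← emb_zero, emb_injective.eq_iff]

lemma deg_emb (p : k[X]) : deg (emb p) = p.natDegree := by
  obtain rfl | hp := eq_or_ne p 0
  · simp [deg, emb_zero]
  rw [deg, neg_eq_iff_eq_neg]
  apply le_antisymm
  · apply HahnSeries.order_le_of_coeff_ne_zero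
    simpa [coeff_emb] using hp
  · rw [HahnSeries.le_order_iff_forall (emb_eq_zero.not.mpr hp)]
    intro n hn
    rw [coeff_emb, if_pos (by lia), coeff_eq_zero_of_natDegree_lt (by lia)]

lemma coeff_polyPart (F : LaurentSeries k) (m : ℕ) :
    (polyPart F).coeff m = F.coeff (-(m : ℤ)) := by
  simp only [polyPart, finsetSum_coeff, coeff_C_mul, coeff_X_pow, mul_ite, mul_one, mul_zero,
    Finset.sum_ite_eq, Finset.mem_range]
  split_ifs with h
  · rfl
  · exact (HahnSeries.coeff_eq_zero_of_lt_order (by lia)).symm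

lemma coeff_frac (F : LaurentSeries k) (n : ℤ) :
    (frac F).coeff n = if 1 ≤ n then F.coeff n else 0 := rfl

lemma emb_polyPart_add_frac (F : LaurentSeries k) : emb (polyPart F) + frac F = F := by
  ext n
  rw [HahnSeries.coeff_add, coeff_emb, coeff_polyPart, coeff_frac]
  obtain hn | hn := le_or_gt n 0
  · rw [if_pos hn, if_neg (by lia), add_zero, Int.toNat_of_nonneg (by lia), neg_neg]
  · rw [if_neg hn.not_ge, if_pos (by lia), zero_add]

end Embedding

section Norm

lemma lnorm_zero : lnorm (0 : LaurentSeries k) = 0 := if_pos rfl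

lemma lnorm_of_ne_zero {F : LaurentSeries k} (hF : F ≠ 0) : lnorm F = (2 : ℝ) ^ deg F := if_neg hF

lemma lnorm_pos {F : LaurentSeries k} (hF : F ≠ 0) : 0 < lnorm F := by
  rw [lnorm_of_ne_zero hF]
  positivity

lemma lnorm_nonneg (F : LaurentSeries k) : 0 ≤ lnorm F := by
  obtain rfl | hF := eq_or_ne F 0
  · exact lnorm_zero.ge
  · exact (lnorm_pos hF).le

lemma lnorm_mul (F G : LaurentSeries k) : lnorm (F * G) = lnorm F * lnorm G := by
  obtain rfl | hF := eq_or_ne F 0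
  · simp [lnorm_zero]
  obtain rfl | hG := eq_or_ne G 0
  · simp [lnorm_zero]
  rw [lnorm_of_ne_zero hF, lnorm_of_ne_zero hG, lnorm_of_ne_zero (mul_ne_zero hF hG), deg,
    HahnSeries.order_mul hF hG, ← zpow_add₀ two_ne_zero, neg_add, deg, deg]

lemma isNonarchimedean_lnorm : IsNonarchimedean (lnorm : LaurentSeries k → ℝ) := by
  intro F G
  obtain rfl | hF := eq_or_ne F 0
  · simp
  obtain rfl | hG := eq_or_ne G 0
  · simp
  obtain hFG | hFG := eq_or_ne (F + G) 0
  · rw [hFG, lnorm_zero]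
    exact le_max_of_le_left (lnorm_nonneg F)
  rw [lnorm_of_ne_zero hF, lnorm_of_ne_zero hG, lnorm_of_ne_zero hFG, le_max_iff,
    zpow_le_zpow_iff_right₀ one_lt_two, zpow_le_zpow_iff_right₀ one_lt_two]
  simpa [deg] using HahnSeries.min_order_le_order_add hFG

/-- The norm `|F|` on `k((X⁻¹))`, bundled as an absolute value in order to use the general theory
of (nonarchimedean) absolute values. -/
def lnormAbv : AbsoluteValue (LaurentSeries k) ℝ where
  toFun := lnorm
  map_mul' := lnorm_mul
  nonneg' := lnorm_nonneg
  eq_zero' _ := ⟨fun h => by_contra fun hF => (lnorm_pos hF).ne' h, fun h => h ▸ lnorm_zero⟩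
  add_le' _ _ := isNonarchimedean_lnorm.add_le lnorm_nonneg

lemma lnorm_inv (F : LaurentSeries k) : lnorm F⁻¹ = (lnorm F)⁻¹ := map_inv₀ lnormAbv F

lemma lnorm_neg (F : LaurentSeries k) : lnorm (-F) = lnorm F := lnormAbv.map_neg F

lemma lnorm_sub_le_max (F G : LaurentSeries k) : lnorm (F - G) ≤ max (lnorm F) (lnorm G) := by
  rw [sub_eq_add_neg, ← lnorm_neg G]
  exact isNonarchimedean_lnorm F (-G)

lemma lnorm_sub_eq_left_of_lt {F G : LaurentSeries k} (h : lnorm G < lnorm F) :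
    lnorm (F - G) = lnorm F := by
  rw [← lnorm_neg G] at h
  rw [sub_eq_add_neg]
  exact IsNonarchimedean.add_eq_left_of_lt (f := lnormAbv) isNonarchimedean_lnorm h

lemma lnorm_lt_one_iff {F : LaurentSeries k} : lnorm F < 1 ↔ ∀ n ≤ 0, F.coeff n = 0 := by
  obtain rfl | hF := eq_or_ne F 0
  · simp [lnorm_zero]
  rw [lnorm_of_ne_zero hF, zpow_lt_one_iff_right₀ one_lt_two, deg, neg_lt_zero,
    ← Int.add_one_le_iff, HahnSeries.le_order_iff_forall hF]
  simp only [Int.lt_add_one_iff]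

lemma lnorm_emb {p : k[X]} (hp : p ≠ 0) : lnorm (emb p) = (2 : ℝ) ^ p.natDegree := by
  rw [lnorm_of_ne_zero (emb_eq_zero.not.mpr hp), deg_emb, zpow_natCast]

lemma one_le_lnorm_emb {p : k[X]} (hp : p ≠ 0) : 1 ≤ lnorm (emb p) := by
  rw [lnorm_emb hp]
  exact one_le_pow₀ one_le_two

lemma lnorm_frac_lt_one (F : LaurentSeries k) : lnorm (frac F) < 1 :=
  lnorm_lt_one_iff.mpr fun n hn => by rw [coeff_frac, if_neg (by lia)]

lemma frac_eq_sub_emb {F : LaurentSeries k} {p : k[X]} (h : lnorm (F - emb p) < 1) :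
    frac F = F - emb p := by
  ext n
  rw [coeff_frac]
  split_ifs with hn
  · rw [HahnSeries.coeff_sub, coeff_emb, if_neg (by lia), sub_zero]
  · exact (lnorm_lt_one_iff.mp h n (by lia)).symm

lemma lnorm_emb_polyPart {F : LaurentSeries k} (hF : 1 ≤ lnorm F) :
    lnorm (emb (polyPart F)) = lnorm F := by
  rw [eq_sub_of_add_eq (emb_polyPart_add_frac F)]
  exact lnorm_sub_eq_left_of_lt ((lnorm_frac_lt_one F).trans_le hF)

lemma lnorm_eq_two_pow_natDegree_polyPart {F : LaurentSeries k} (hF : 1 ≤ lnorm F) :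
    lnorm F = (2 : ℝ) ^ (polyPart F).natDegree := by
  have hpoly : polyPart F ≠ 0 := by
    intro h
    rw [← lnorm_emb_polyPart hF, h, emb_zero, lnorm_zero] at hF
    exact hF.not_gt one_pos
  rw [← lnorm_emb hpoly, lnorm_emb_polyPart hF]

lemma natDegree_polyPart_pos {F : LaurentSeries k} (hF : 1 < lnorm F) :
    0 < (polyPart F).natDegree := by
  rw [lnorm_eq_two_pow_natDegree_polyPart hF.le] at hF
  exact Nat.pos_of_ne_zero fun h => by simp [h] at hF

end Norm

section Rational

lemma isRat_zero : IsRat (0 : LaurentSeries k) := ⟨0, 1, one_ne_zero, by simp [emb_zero]⟩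

lemma IsRat.inv {F : LaurentSeries k} (hF : IsRat F) : IsRat F⁻¹ := by
  obtain rfl | hF0 := eq_or_ne F 0
  · rw [inv_zero]
    exact isRat_zero
  obtain ⟨p, q, hq, hpq⟩ := hF
  refine ⟨q, p, ?_, by rw [← hpq, inv_mul_cancel_left₀ hF0]⟩
  rintro rfl
  rw [emb_zero] at hpq
  exact mul_ne_zero hF0 (emb_eq_zero.not.mpr hq) hpq

lemma IsRat.emb_add {F : LaurentSeries k} (hF : IsRat F) (r : k[X]) : IsRat (emb r + F) := by
  obtain ⟨p, q, hq, hpq⟩ := hF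
  refine ⟨r * q + p, q, hq, ?_⟩
  rw [Littlewood.emb_add, emb_mul, add_mul, hpq]

end Rational

section Continuants

variable (a : ℕ → k[X])

lemma num_succ_mul_den_sub_num_mul_den_succ (n : ℕ) :
    num a (n + 1) * den a n - num a n * den a (n + 1) = (-1) ^ n := by
  induction n with
  | zero =>
    simp only [num, den]
    ring
  | succ n ih =>
    rw [num, den, pow_succ, ← ih]
    ring

lemma isCoprime_den_num (n : ℕ) : IsCoprime (den a n) (num a n) := by
  have hsq : ((-1 : k[X]) ^ n) * (-1) ^ n = 1 := by rw [← mul_pow, neg_one_mul, neg_neg, one_pow]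
  refine ⟨(-1) ^ n * num a (n + 1), -(-1) ^ n * den a (n + 1), ?_⟩
  linear_combination (-1) ^ n * num_succ_mul_den_sub_num_mul_den_succ a n + hsq

variable {a} (ha : ∀ n, 0 < (a (n + 1)).natDegree)
include ha

lemma natDegree_den_succ (n : ℕ) :
    (den a (n + 1)).natDegree = (a (n + 1)).natDegree + (den a n).natDegree := by
  induction n with
  | zero => simp [den]
  | succ n ih =>
    have hden : den a (n + 1) ≠ 0 := ne_zero_of_natDegree_gt (n := 0) (by have := ha n; lia)
    have hmul : (a (n + 2) * den a (n + 1)).natDegree =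
        (a (n + 2)).natDegree + (den a (n + 1)).natDegree :=
      natDegree_mul (ne_zero_of_natDegree_gt (ha (n + 1))) hden
    rw [den, natDegree_add_eq_left_of_natDegree_lt (by have := ha n; lia), hmul]

lemma strictMono_natDegree_den : StrictMono fun n => (den a n).natDegree :=
  strictMono_nat_of_lt_succ fun n => by
    rw [natDegree_den_succ ha]
    exact Nat.lt_add_of_pos_left (ha n)

lemma den_ne_zero (n : ℕ) : den a n ≠ 0 := by
  cases n with
  | zero => exact one_ne_zero
  | succ n => exact ne_zero_of_natDegree_gt (strictMono_natDegree_den ha n.lt_succ_self)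

lemma exists_natDegree_den_le_lt (d : ℕ) :
    ∃ n, (den a n).natDegree ≤ d ∧ d < (den a (n + 1)).natDegree := by
  have hmono := strictMono_natDegree_den ha
  obtain ⟨n, hn, hn'⟩ := hmono.exists_between_of_tendsto_atTop hmono.tendsto_atTop
    (x := d + 1) (by simp [den])
  exact ⟨n, Nat.le_of_lt_succ hn, hn'⟩

end Continuants

lemma one_le_lnorm_mul_fnorm_of_isCoprime {F : LaurentSeries k} {P Q q : k[X]}
    (hQP : IsCoprime Q P) (hq : q ≠ 0) (hdeg : q.natDegree < Q.natDegree)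
    (herr : lnorm (emb q) * lnorm (emb Q * F - emb P) < 1) :
    1 ≤ lnorm (emb Q) * fnorm (emb q * F) := by
  set p := polyPart (emb q * F)
  have hne : q * P - p * Q ≠ 0 := by
    intro h
    have hdvd : Q ∣ q := hQP.dvd_of_dvd_mul_right ⟨p, by rw [sub_eq_zero.mp h, mul_comm]⟩
    exact (natDegree_le_of_dvd hdvd hq).not_gt hdeg
  have hdet : emb (q * P - p * Q) =
      emb Q * frac (emb q * F) - emb q * (emb Q * F - emb P) := by
    rw [emb_sub, emb_mul, emb_mul]
    linear_combination -emb Q * emb_polyPart_add_frac (emb q * F)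
  have hmax := (one_le_lnorm_emb hne).trans (hdet ▸ lnorm_sub_le_max _ _)
  rw [lnorm_mul, lnorm_mul] at hmax
  exact (le_max_iff.mp hmax).resolve_right herr.not_ge

section Convergents

/-- The error `q_n F - p_n` of the `n`-th convergent of `F`. It turns out to be the fractional part
of `q_n F`, so that its norm is `‖q_n F‖`. -/
def convErr (F : LaurentSeries k) (n : ℕ) : LaurentSeries k :=
  emb (den (pq F) n) * F - emb (num (pq F) n)

lemma inv_cfRem_succ (F : LaurentSeries k) (n : ℕ) :
    (cfRem F (n + 1))⁻¹ = cfRem F n - emb (pq F n) := inv_inv _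

lemma inv_cfRem_succ_eq_frac (F : LaurentSeries k) (n : ℕ) :
    (cfRem F (n + 1))⁻¹ = frac (cfRem F n) := by
  rw [inv_cfRem_succ, pq]
  exact sub_eq_of_eq_add' (emb_polyPart_add_frac (cfRem F n)).symm

lemma convErr_zero (F : LaurentSeries k) : convErr F 0 = (cfRem F 1)⁻¹ := by
  rw [inv_cfRem_succ, convErr, den, num, emb_one, one_mul, cfRem]

lemma convErr_one (F : LaurentSeries k) : convErr F 1 = emb (pq F 1) * convErr F 0 - 1 := by
  simp only [convErr, den, num, emb_add, emb_mul, emb_one]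
  ring

lemma convErr_add_two (F : LaurentSeries k) (n : ℕ) :
    convErr F (n + 2) = emb (pq F (n + 2)) * convErr F (n + 1) + convErr F n := by
  simp only [convErr, den, num, emb_add, emb_mul]
  ring

variable {F : LaurentSeries k} (hF : ¬ IsRat F)
include hF

lemma not_isRat_cfRem (n : ℕ) : ¬ IsRat (cfRem F n) := by
  induction n with
  | zero => exact hF
  | succ n ih =>
    intro h
    have hrat := h.inv.emb_add (pq F n)
    rw [inv_cfRem_succ, add_sub_cancel] at hrat
    exact ih hrat

lemma cfRem_ne_zero (n : ℕ) : cfRem F n ≠ 0 :=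
  fun h => not_isRat_cfRem hF n (h ▸ isRat_zero)

lemma one_lt_lnorm_cfRem_succ (n : ℕ) : 1 < lnorm (cfRem F (n + 1)) := by
  rw [← inv_inv (lnorm _), ← lnorm_inv,
    one_lt_inv₀ (lnorm_pos (inv_ne_zero (cfRem_ne_zero hF (n + 1)))), inv_cfRem_succ_eq_frac]
  exact lnorm_frac_lt_one _

lemma lnorm_cfRem_succ (n : ℕ) : lnorm (cfRem F (n + 1)) = (2 : ℝ) ^ (pq F (n + 1)).natDegree :=
  lnorm_eq_two_pow_natDegree_polyPart (one_lt_lnorm_cfRem_succ hF n).le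

lemma natDegree_pq_succ_pos (n : ℕ) : 0 < (pq F (n + 1)).natDegree :=
  natDegree_polyPart_pos (one_lt_lnorm_cfRem_succ hF n)

lemma convErr_succ (n : ℕ) : convErr F (n + 1) = -convErr F n * (cfRem F (n + 2))⁻¹ := by
  induction n with
  | zero =>
    rw [convErr_one, convErr_zero, inv_cfRem_succ F 1]
    linear_combination inv_mul_cancel₀ (cfRem_ne_zero hF 1)
  | succ n ih =>
    rw [convErr_add_two, inv_cfRem_succ F (n + 2)]
    linear_combination cfRem F (n + 2) * ih -
      convErr F n * inv_mul_cancel₀ (cfRem_ne_zero hF (n + 2))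

lemma lnorm_convErr (n : ℕ) :
    lnorm (convErr F n) = ((2 : ℝ) ^ (den (pq F) (n + 1)).natDegree)⁻¹ := by
  induction n with
  | zero => rw [convErr_zero, lnorm_inv, lnorm_cfRem_succ hF, den]
  | succ n ih =>
    rw [convErr_succ hF, lnorm_mul, lnorm_neg, ih, lnorm_inv, lnorm_cfRem_succ hF,
      natDegree_den_succ (natDegree_pq_succ_pos hF) (n + 1), pow_add, mul_inv_rev]

lemma fnorm_den_mul (n : ℕ) :
    fnorm (emb (den (pq F) n) * F) = ((2 : ℝ) ^ (den (pq F) (n + 1)).natDegree)⁻¹ := by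
  have hpos : 0 < (den (pq F) (n + 1)).natDegree :=
    (Nat.zero_le _).trans_lt (strictMono_natDegree_den (natDegree_pq_succ_pos hF) n.lt_succ_self)
  have hlt : lnorm (convErr F n) < 1 := by
    rw [lnorm_convErr hF]
    exact inv_lt_one_of_one_lt₀ (one_lt_pow₀ one_lt_two hpos.ne')
  rw [fnorm, frac_eq_sub_emb hlt, ← lnorm_convErr hF, convErr]

lemma lnorm_den_mul_fnorm (n : ℕ) :
    lnorm (emb (den (pq F) n)) * fnorm (emb (den (pq F) n) * F) =
      ((2 : ℝ) ^ (pq F (n + 1)).natDegree)⁻¹ := by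
  have ha := natDegree_pq_succ_pos hF
  rw [lnorm_emb (den_ne_zero ha n), fnorm_den_mul hF, natDegree_den_succ ha, pow_add, mul_inv_rev,
    mul_inv_cancel_left₀ (by positivity)]

lemma fnorm_den_mul_le {n : ℕ} {q : k[X]} (hq : q ≠ 0)
    (hlt : q.natDegree < (den (pq F) (n + 1)).natDegree) :
    fnorm (emb (den (pq F) n) * F) ≤ fnorm (emb q * F) := by
  have ha := natDegree_pq_succ_pos hF
  have hmono := strictMono_natDegree_den ha (n + 1).lt_succ_self
  have herr : lnorm (emb q) * lnorm (convErr F (n + 1)) < 1 := by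
    rw [lnorm_convErr hF, lnorm_emb hq, ← div_eq_mul_inv, div_lt_one (by positivity)]
    exact pow_lt_pow_right₀ one_lt_two (hlt.trans hmono)
  rw [fnorm_den_mul hF, inv_le_iff_one_le_mul₀' (by positivity), ← lnorm_emb (den_ne_zero ha _)]
  exact one_le_lnorm_mul_fnorm_of_isCoprime (isCoprime_den_num (pq F) (n + 1)) hq hlt herr

lemma forall_le_lnorm_mul_fnorm_iff {c : ℝ} :
    (∀ q : k[X], q ≠ 0 → c ≤ lnorm (emb q) * fnorm (emb q * F)) ↔
      ∀ n, c ≤ ((2 : ℝ) ^ (pq F (n + 1)).natDegree)⁻¹ := by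
  have ha := natDegree_pq_succ_pos hF
  refine ⟨fun h n => lnorm_den_mul_fnorm hF n ▸ h _ (den_ne_zero ha n), fun h q hq => ?_⟩
  obtain ⟨n, hle, hlt⟩ := exists_natDegree_den_le_lt ha q.natDegree
  calc c ≤ ((2 : ℝ) ^ (pq F (n + 1)).natDegree)⁻¹ := h n
    _ = lnorm (emb (den (pq F) n)) * fnorm (emb (den (pq F) n) * F) :=
      (lnorm_den_mul_fnorm hF n).symm
    _ ≤ lnorm (emb q) * fnorm (emb q * F) := by
      gcongr
      · exact lnorm_nonneg _
      · exact lnorm_nonneg _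
      · rw [lnorm_emb (den_ne_zero ha n), lnorm_emb hq]
        exact pow_le_pow_right₀ one_le_two hle
      · exact fnorm_den_mul_le hF hq hlt

end Convergents

theorem bad_iff_bounded_partial_quotients {k : Type*} [Field k] (F : LaurentSeries k)
    (hF : ¬ IsRat F) :
    Bad F ↔ ∃ M : ℕ, ∀ n : ℕ, (pq F n).natDegree ≤ M := by
  simp only [Bad, forall_le_lnorm_mul_fnorm_iff hF, ← inv_pow]
  constructor
  · rintro ⟨c, hc, hle⟩
    obtain ⟨M, hM⟩ := exists_pow_lt_of_lt_one hc two_inv_lt_one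
    refine ⟨max (pq F 0).natDegree M, fun n => ?_⟩
    cases n with
    | zero => exact le_max_left _ _
    | succ n =>
      have hlt : (pq F (n + 1)).natDegree < M :=
        (pow_lt_pow_iff_right_of_lt_one₀ (by positivity) two_inv_lt_one).mp (hM.trans_le (hle n))
      exact hlt.le.trans (le_max_right _ _)
  · rintro ⟨M, hM⟩
    exact ⟨2⁻¹ ^ M, by positivity, fun n =>
      pow_le_pow_of_le_one (by positivity) two_inv_lt_one.le (hM (n + 1))⟩

end Littlewood
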